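/- arXiv:2001.05986 — 2 statements merged into one kernel-verified Lean document; each statement's English description precedes it below -/
import Mathlib

section
/- Equip ℂ[x,x⁻¹] with the ℂ-linear operators P = X (multiplication by x) and Q = −D (negative of formal differentiation); this is the Weyl module Typ₀⁻. Then: (i) the only ℂ-subspaces U ⊆ ℂ[x,x⁻¹] with P(U) ⊆ U and Q(U) ⊆ U are 0, ℂ[x], and ℂ[x,x⁻¹]; in particular the extension 0 → ℂ[x] → ℂ[x,x⁻¹] → ℂ[x,x⁻¹]/ℂ[x] → 0 is non-split; and (ii) there is a ℂ-linear isomorphism ψ : ℂ[x,x⁻¹]/ℂ[x] → ℂ[x] with ψ∘P̄ = D∘ψ and ψ∘Q̄ = X∘ψ, i.e. the quotient is isomorphic to the Weyl module ℂ[x] with p acting as d/dx and q as x. -/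
/-- Formal differentiation `xⁿ ↦ n·xⁿ⁻¹` on the Laurent polynomial ring `ℂ[x,x⁻¹]`,
realized as finitely supported functions `ℤ →₀ ℂ` (with `xⁿ` corresponding to
`Finsupp.single n 1`). -/
noncomputable def laurentD : (ℤ →₀ ℂ) →ₗ[ℂ] (ℤ →₀ ℂ) :=
  Finsupp.lsum ℂ (fun n : ℤ => (n : ℂ) • Finsupp.lsingle (n - 1))

/-- Multiplication by `x` on the Laurent polynomial ring `ℂ[x,x⁻¹]`, realized as finitely
supported functions `ℤ →₀ ℂ`. -/
noncomputable def laurentX : (ℤ →₀ ℂ) →ₗ[ℂ] (ℤ →₀ ℂ) :=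
  Finsupp.lsum ℂ (fun n : ℤ => Finsupp.lsingle (n + 1))

/-- The subspace `ℂ[x] ⊆ ℂ[x,x⁻¹]` of (honest) polynomials: Laurent polynomials with no
negative-degree terms. -/
noncomputable def polyPart : Submodule ℂ (ℤ →₀ ℂ) where
  carrier := {f | ∀ n : ℤ, n < 0 → f n = 0}
  add_mem' := by
    intro a b ha hb n hn
    simp [ha n hn, hb n hn]
  zero_mem' := by intro n hn; simp
  smul_mem' := by
    intro c f hf n hn
    simp [hf n hn]

theorem laurentX_apply (f : ℤ →₀ ℂ) (n : ℤ) : laurentX f n = f (n - 1) := by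
  induction f using Finsupp.induction_linear with
  | zero => simp
  | add f g hf hg => simp [hf, hg]
  | single m c =>
    simp only [laurentX, Finsupp.lsum_single, Finsupp.lsingle_apply, Finsupp.single_apply]
    grind

theorem laurentD_apply (f : ℤ →₀ ℂ) (n : ℤ) :
    laurentD f n = ((n : ℂ) + 1) * f (n + 1) := by
  induction f using Finsupp.induction_linear with
  | zero => simp
  | add f g hf hg => simp [hf, hg, mul_add]
  | single m c =>
    simp only [laurentD, Finsupp.lsum_single, LinearMap.smul_apply, Finsupp.lsingle_apply,
      Finsupp.smul_apply, Finsupp.single_apply, smul_eq_mul]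
    by_cases h : m = n + 1
    · subst h; simp
    · rw [if_neg h, if_neg (by omega)]; simp

theorem mem_polyPart (f : ℤ →₀ ℂ) : f ∈ polyPart ↔ ∀ n : ℤ, n < 0 → f n = 0 := Iff.rfl

theorem wt_aux (U : Submodule ℂ (ℤ →₀ ℂ)) (hX : ∀ f ∈ U, laurentX f ∈ U)
    (hD : ∀ f ∈ U, - laurentD f ∈ U) (f : ℤ →₀ ℂ) (hf : f ∈ U) (s : Finset ℤ) :
    ∃ g ∈ U, ∀ k, g k = (∏ m ∈ s, ((k : ℂ) - m)) * f k := by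
  induction s using Finset.induction_on with
  | empty => exact ⟨f, hf, by simp⟩
  | insert a s ha ih =>
    obtain ⟨g, hg, hk⟩ := ih
    refine ⟨-laurentX (-laurentD g) - (a : ℂ) • g,
      U.sub_mem (U.neg_mem (hX _ (hD _ hg))) (U.smul_mem _ hg), fun k => ?_⟩
    rw [Finset.prod_insert ha]
    simp only [Finsupp.sub_apply, Finsupp.neg_apply, laurentX_apply, laurentD_apply,
      Finsupp.smul_apply, smul_eq_mul, sub_add_cancel, hk]
    push_cast
    ring

theorem wt_mem (U : Submodule ℂ (ℤ →₀ ℂ)) (hX : ∀ f ∈ U, laurentX f ∈ U)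
    (hD : ∀ f ∈ U, - laurentD f ∈ U) (f : ℤ →₀ ℂ) (hf : f ∈ U) (n : ℤ) (hn : f n ≠ 0) :
    Finsupp.single n (1 : ℂ) ∈ U := by
  obtain ⟨g, hg, hk⟩ := wt_aux U hX hD f hf (f.support.erase n)
  have hp : (∏ m ∈ f.support.erase n, ((n : ℂ) - m)) ≠ 0 := by
    rw [Finset.prod_ne_zero_iff]
    intro m hm
    rw [sub_ne_zero]
    exact_mod_cast (Finset.ne_of_mem_erase hm).symm
  have hgn : g n ≠ 0 := by rw [hk]; exact mul_ne_zero hp hn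
  have : Finsupp.single n (1 : ℂ) = (g n)⁻¹ • g := by
    ext k
    by_cases h : k = n
    · subst h; simp [hgn]
    · have : g k = 0 := by
        rw [hk]
        by_cases h0 : f k = 0
        · simp [h0]
        · rw [Finset.prod_eq_zero (i := k)]
          · simp
          · simp [h, h0]
          · simp
      simp [this, Ne.symm h]
  rw [this]
  exact U.smul_mem _ hg

theorem up_mem (U : Submodule ℂ (ℤ →₀ ℂ)) (hX : ∀ f ∈ U, laurentX f ∈ U) (n : ℤ)
    (h : Finsupp.single n (1 : ℂ) ∈ U) (j : ℕ) : Finsupp.single (n + j) (1 : ℂ) ∈ U := by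
  induction j with
  | zero => simpa using h
  | succ j ih =>
    have := hX _ ih
    simpa [laurentX, add_assoc] using this

theorem down_mem (U : Submodule ℂ (ℤ →₀ ℂ)) (hD : ∀ f ∈ U, - laurentD f ∈ U) (n : ℤ)
    (h : Finsupp.single n (1 : ℂ) ∈ U) (hn : n ≠ 0) : Finsupp.single (n - 1) (1 : ℂ) ∈ U := by
  have h1 := U.smul_mem (-(n : ℂ)⁻¹) (hD _ h)
  have hn' : (n : ℂ) ≠ 0 := by exact_mod_cast hn
  simpa [laurentD, hn'] using h1

theorem mem_of_singles (U : Submodule ℂ (ℤ →₀ ℂ)) (f : ℤ →₀ ℂ)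
    (h : ∀ n, f n ≠ 0 → Finsupp.single n (1 : ℂ) ∈ U) : f ∈ U := by
  rw [← Finsupp.sum_single f]
  refine U.sum_mem fun n hn => ?_
  have := U.smul_mem (f n) (h n (by simpa using hn))
  simpa using this

theorem classify (U : Submodule ℂ (ℤ →₀ ℂ)) (hX : ∀ f ∈ U, laurentX f ∈ U)
    (hD : ∀ f ∈ U, - laurentD f ∈ U) : U = ⊥ ∨ U = polyPart ∨ U = ⊤ := by
  by_cases h1 : U ≤ polyPart
  · by_cases h0 : U = ⊥
    · exact Or.inl h0
    · right; left
      refine le_antisymm h1 ?_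
      obtain ⟨f, hf, hf0⟩ := U.ne_bot_iff.1 h0
      obtain ⟨n, hn⟩ := Finsupp.ne_iff.1 hf0
      have hn0 : 0 ≤ n := by
        by_contra h
        exact hn (h1 hf n (by omega))
      have key : ∀ k : ℕ, Finsupp.single (k : ℤ) (1 : ℂ) ∈ U → Finsupp.single (0 : ℤ) (1 : ℂ) ∈ U := by
        intro k
        induction k with
        | zero => intro h; simpa using h
        | succ k ih =>
          intro h
          apply ih
          have := down_mem U hD _ h (by omega)
          simpa using this
      have hz : Finsupp.single (0 : ℤ) (1 : ℂ) ∈ U := by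
        apply key n.toNat
        rw [Int.toNat_of_nonneg hn0]
        exact wt_mem U hX hD f hf n hn
      intro g hg
      apply mem_of_singles
      intro m hm
      have hm0 : 0 ≤ m := by
        by_contra h
        exact hm (hg m (by omega))
      have := up_mem U hX 0 hz m.toNat
      rwa [Int.toNat_of_nonneg hm0, zero_add] at this
  · right; right
    obtain ⟨f, hf, hf'⟩ := SetLike.not_le_iff_exists.1 h1
    rw [mem_polyPart] at hf'
    push Not at hf'
    obtain ⟨n, hn, hfn⟩ := hf'
    have hs := wt_mem U hX hD f hf n hfn
    have key : ∀ k : ℕ, Finsupp.single (n - k : ℤ) (1 : ℂ) ∈ U := by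
      intro k
      induction k with
      | zero => simpa using hs
      | succ k ih =>
        have := down_mem U hD _ ih (by omega)
        simpa [sub_sub] using this
    rw [eq_top_iff]
    intro g _
    apply mem_of_singles
    intro m _
    rcases le_total n m with h | h
    · have := up_mem U hX n hs (m - n).toNat
      rwa [Int.toNat_of_nonneg (by omega), add_sub_cancel] at this
    · have := key (n - m).toNat
      rwa [Int.toNat_of_nonneg (by omega), sub_sub_cancel] at this

noncomputable def phiMap : (ℤ →₀ ℂ) →ₗ[ℂ] Polynomial ℂ :=
  Finsupp.lsum ℂ (fun n : ℤ => if n < 0 then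
    ((((-n - 1).toNat.factorial : ℕ) : ℂ)⁻¹) • Polynomial.monomial (-n - 1).toNat else 0)

theorem phiMap_coeff (f : ℤ →₀ ℂ) (k : ℕ) :
    (phiMap f).coeff k = ((k.factorial : ℕ) : ℂ)⁻¹ * f (-k - 1) := by
  induction f using Finsupp.induction_linear with
  | zero => simp
  | add f g hf hg => simp [hf, hg, mul_add]
  | single m c =>
    simp only [phiMap, Finsupp.lsum_single, Finsupp.single_apply]
    by_cases h : m = -k - 1
    · subst h
      have : (-(-(k : ℤ) - 1) - 1).toNat = k := by omega
      rw [if_pos (by omega), this]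
      simp
    · rw [if_neg h]
      by_cases hm : m < 0
      · rw [if_pos hm, LinearMap.smul_apply, Polynomial.coeff_smul, Polynomial.coeff_monomial,
          if_neg (by omega)]
        simp
      · simp [hm]

theorem phiMap_ker : LinearMap.ker phiMap = polyPart := by
  ext f
  rw [LinearMap.mem_ker, mem_polyPart, Polynomial.ext_iff]
  constructor
  · intro h n hn
    have h1 := h (-n - 1).toNat
    rw [phiMap_coeff, Int.toNat_of_nonneg (by omega)] at h1
    have : -(-n - 1) - 1 = n := by ring
    rw [this] at h1
    simpa [Nat.factorial_ne_zero] using h1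
  · intro h k
    rw [phiMap_coeff, h _ (by omega)]
    simp

theorem phiMap_surj : Function.Surjective phiMap := by
  intro p
  induction p using Polynomial.induction_on' with
  | add p q hp hq =>
    obtain ⟨a, rfl⟩ := hp
    obtain ⟨b, rfl⟩ := hq
    exact ⟨a + b, map_add _ _ _⟩
  | monomial k a =>
    refine ⟨Finsupp.single (-k - 1 : ℤ) ((k.factorial : ℂ) * a), ?_⟩
    ext j
    rw [phiMap_coeff, Polynomial.coeff_monomial, Finsupp.single_apply]
    by_cases h : k = j
    · subst h
      have : (k.factorial : ℂ) ≠ 0 := by exact_mod_cast k.factorial_ne_zero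
      simp [this]
    · rw [if_neg h, if_neg (by omega), mul_zero]

theorem phiMap_X (f : ℤ →₀ ℂ) : phiMap (laurentX f) = Polynomial.derivative (phiMap f) := by
  ext k
  rw [Polynomial.coeff_derivative, phiMap_coeff, phiMap_coeff, laurentX_apply,
    Nat.factorial_succ]
  have h1 : (k.factorial : ℂ) ≠ 0 := by exact_mod_cast k.factorial_ne_zero
  have h2 : (k : ℂ) + 1 ≠ 0 := by exact_mod_cast k.succ_ne_zero
  have h3 : (-((k + 1 : ℕ) : ℤ) - 1) = -k - 1 - 1 := by push_cast; ring
  rw [h3]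
  push_cast
  field_simp

theorem phiMap_D (f : ℤ →₀ ℂ) : phiMap (- laurentD f) = Polynomial.X * phiMap f := by
  ext k
  rw [phiMap_coeff, Finsupp.neg_apply, laurentD_apply]
  cases k with
  | zero => simp
  | succ k =>
    rw [Polynomial.coeff_X_mul, phiMap_coeff, Nat.factorial_succ]
    have h1 : (k.factorial : ℂ) ≠ 0 := by exact_mod_cast k.factorial_ne_zero
    have h2 : (k : ℂ) + 1 ≠ 0 := by exact_mod_cast k.succ_ne_zero
    have h3 : (-((k + 1 : ℕ) : ℤ) - 1 + 1) = -k - 1 := by push_cast; ring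
    rw [h3]
    push_cast
    field_simp
    ring

theorem polyPart_ne_bot : polyPart ≠ ⊥ := by
  intro h
  have : Finsupp.single (0 : ℤ) (1 : ℂ) ∈ polyPart := by
    intro n hn
    simp [Finsupp.single_apply, hn.ne']
  rw [h] at this
  simp at this

theorem polyPart_ne_top : polyPart ≠ ⊤ := by
  intro h
  have : Finsupp.single (-1 : ℤ) (1 : ℂ) ∈ polyPart := by rw [h]; trivial
  have := this (-1) (by norm_num)
  simp at this

/-- The Weyl module `Typ₀⁻`: `ℂ[x,x⁻¹]` with `P = X` (multiplication by `x`) and `Q = −D`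
(negative of differentiation).  (i) The only `(P,Q)`-invariant subspaces are `0`, `ℂ[x]`
and `ℂ[x,x⁻¹]`; in particular the extension `0 → ℂ[x] → ℂ[x,x⁻¹] → ℂ[x,x⁻¹]/ℂ[x] → 0` is
non-split.  (ii) The quotient by `ℂ[x]` is isomorphic to the Weyl module `ℂ[x]` with `p`
acting as `d/dx` and `q` as `x`. -/
theorem laurent_conjugate_weyl_module_classification :
    (∀ U : Submodule ℂ (ℤ →₀ ℂ),
        (∀ f ∈ U, laurentX f ∈ U) → (∀ f ∈ U, - laurentD f ∈ U) →
        U = ⊥ ∨ U = polyPart ∨ U = ⊤) ∧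
    (¬ ∃ V : Submodule ℂ (ℤ →₀ ℂ),
        (∀ f ∈ V, laurentX f ∈ V) ∧ (∀ f ∈ V, - laurentD f ∈ V) ∧ IsCompl polyPart V) ∧
    (∃ ψ : ((ℤ →₀ ℂ) ⧸ polyPart) ≃ₗ[ℂ] Polynomial ℂ,
      (∀ f : ℤ →₀ ℂ,
        ψ (Submodule.Quotient.mk (laurentX f)) =
          Polynomial.derivative (ψ (Submodule.Quotient.mk f))) ∧
      (∀ f : ℤ →₀ ℂ,
        ψ (Submodule.Quotient.mk (- laurentD f)) =
          Polynomial.X * ψ (Submodule.Quotient.mk f))) := by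
  refine ⟨classify, ?_, ?_⟩
  · rintro ⟨V, hX, hD, hc⟩
    rcases classify V hX hD with rfl | rfl | rfl
    · exact polyPart_ne_top (by simpa using hc.sup_eq_top)
    · exact polyPart_ne_bot (by simpa using hc.inf_eq_bot)
    · exact polyPart_ne_bot (by simpa using hc.inf_eq_bot)
  · refine ⟨(Submodule.quotEquivOfEq _ _ phiMap_ker.symm).trans
      (phiMap.quotKerEquivOfSurjective phiMap_surj), fun f => ?_, fun f => ?_⟩
    · exact phiMap_X f
    · exact phiMap_D f
end

section
/- For every real j with 0 < j < 1, the integral ∫₀¹ x^{j−1}(1−x)^{−j}(1 − x/2)^{j−1} dx converges and equals π^{3/2} / ( sin(πj)·Γ(1 − j/2)·Γ((1+j)/2) ); in particular it is nonzero. -/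
open Real

lemma aux_beta (a b : ℝ) (ha : 0 < a) (hb : 0 < b) :
    MeasureTheory.IntegrableOn (fun t : ℝ => t ^ (a - 1) * (1 - t) ^ (b - 1)) (Set.Ioo 0 1) ∧
    ∫ t in Set.Ioo (0:ℝ) 1, t ^ (a - 1) * (1 - t) ^ (b - 1) =
      Real.Gamma a * Real.Gamma b / Real.Gamma (a + b) := by
  have hc := Complex.betaIntegral_convergent (u := (a : ℂ)) (v := (b : ℂ)) (by simpa) (by simpa)
  rw [intervalIntegrable_iff_integrableOn_Ioo_of_le zero_le_one] at hc
  have hcong : ∀ t ∈ Set.Ioo (0:ℝ) 1, (t : ℂ) ^ ((a : ℂ) - 1) * (1 - (t : ℂ)) ^ ((b : ℂ) - 1) =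
      ((t ^ (a - 1) * (1 - t) ^ (b - 1) : ℝ) : ℂ) := by
    intro t ht
    rw [Complex.ofReal_mul, Complex.ofReal_cpow ht.1.le, Complex.ofReal_cpow (by linarith [ht.2])]
    push_cast
    rfl
  have hc2 := (MeasureTheory.integrableOn_congr_fun hcong measurableSet_Ioo).1 hc
  refine ⟨by simpa [MeasureTheory.IntegrableOn] using hc2.re, ?_⟩
  have h := ProbabilityTheory.beta_eq_betaIntegralReal a b ha hb
  rw [ProbabilityTheory.beta] at h
  rw [h, Complex.betaIntegral, intervalIntegral.integral_of_le zero_le_one,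
    MeasureTheory.integral_Ioc_eq_integral_Ioo,
    MeasureTheory.setIntegral_congr_fun measurableSet_Ioo hcong, integral_complex_ofReal,
    Complex.ofReal_re]

lemma aux_point (j x : ℝ) (hx : x ∈ Set.Ioo (0:ℝ) 1) :
    |(-2 * (1 - x))| • (((1 - x) ^ 2) ^ ((1 - j) / 2 - 1) * (1 - (1 - x) ^ 2) ^ (j - 1)) =
      2 ^ j * (x ^ (j - 1) * (1 - x) ^ (-j) * (1 - x / 2) ^ (j - 1)) := by
  obtain ⟨h0, h1⟩ := hx
  have hy : 0 < 1 - x := by linarith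
  have hz : 0 < 1 - x / 2 := by linarith
  have e1 : |(-2 * (1 - x))| = 2 * (1 - x) := by
    rw [abs_of_neg (by linarith)]; ring
  have e2 : ((1 - x) ^ 2) ^ ((1 - j) / 2 - 1) = (1 - x) ^ (-j - 1) := by
    rw [← Real.rpow_natCast, ← Real.rpow_mul hy.le]
    congr 1; push_cast; ring
  have e3 : 1 - (1 - x) ^ 2 = 2 * x * (1 - x / 2) := by ring
  have e4 : (1 - x) ^ (-j) = (1 - x) ^ (-j - 1) * (1 - x) := by
    rw [← Real.rpow_add_one hy.ne']; congr 1; ring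
  have e5 : (2:ℝ) ^ j = 2 ^ (j - 1) * 2 := by
    rw [← Real.rpow_add_one two_ne_zero]; congr 1; ring
  rw [e1, e2, e3, e4, e5, Real.mul_rpow (by positivity) hz.le,
    Real.mul_rpow zero_le_two h0.le, smul_eq_mul]
  ring

lemma aux_image : (fun x : ℝ => (1 - x) ^ 2) '' Set.Ioo 0 1 = Set.Ioo 0 1 := by
  ext t
  constructor
  · rintro ⟨x, ⟨h0, h1⟩, rfl⟩
    constructor <;> simp only <;> nlinarith
  · rintro ⟨h0, h1⟩
    refine ⟨1 - √t, ⟨?_, ?_⟩, ?_⟩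
    · have : √t < 1 := by rw [Real.sqrt_lt' one_pos]; linarith
      linarith
    · have := Real.sqrt_pos.2 h0
      linarith
    · simp [Real.sq_sqrt h0.le]

/-- For `0 < j < 1`,
`∫₀¹ x^{j−1}(1−x)^{−j}(1 − x/2)^{j−1} dx = π^{3/2} / (sin(πj)·Γ(1 − j/2)·Γ((1+j)/2))`,
the integral being convergent; in particular it is nonzero. -/
theorem rigidity_integral_evaluation (j : ℝ) (hj0 : 0 < j) (hj1 : j < 1) :
    IntervalIntegrable
      (fun x : ℝ => x ^ (j - 1) * (1 - x) ^ (-j) * (1 - x / 2) ^ (j - 1))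
      MeasureTheory.volume 0 1 ∧
    (∫ x in (0:ℝ)..1, x ^ (j - 1) * (1 - x) ^ (-j) * (1 - x / 2) ^ (j - 1)) =
      π ^ ((3 : ℝ) / 2) /
        (Real.sin (π * j) * Real.Gamma (1 - j / 2) * Real.Gamma ((1 + j) / 2)) ∧
    (∫ x in (0:ℝ)..1, x ^ (j - 1) * (1 - x) ^ (-j) * (1 - x / 2) ^ (j - 1)) ≠ 0 := by
  have ha : 0 < (1 - j) / 2 := by linarith
  obtain ⟨hi, hv⟩ := aux_beta ((1 - j) / 2) j ha hj0
  have hd : ∀ x ∈ Set.Ioo (0:ℝ) 1,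
      HasDerivWithinAt (fun x : ℝ => (1 - x) ^ 2) (-2 * (1 - x)) (Set.Ioo 0 1) x := by
    intro x _
    have := (((hasDerivAt_id x).const_sub 1).pow 2).hasDerivWithinAt (s := Set.Ioo (0:ℝ) 1)
    convert! this using 1
    simp
  have hinj : Set.InjOn (fun x : ℝ => (1 - x) ^ 2) (Set.Ioo 0 1) := by
    intro x hx y hy h
    have h' : (1 - x) ^ 2 = (1 - y) ^ 2 := h
    have := (sq_eq_sq₀ (by linarith [hx.2]) (by linarith [hy.2])).1 h'
    linarith
  have h2 : (0:ℝ) < 2 ^ j := by positivity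
  rw [← aux_image, MeasureTheory.integrableOn_image_iff_integrableOn_abs_deriv_smul
    measurableSet_Ioo hd hinj, MeasureTheory.integrableOn_congr_fun
      (fun x hx => aux_point j x hx) measurableSet_Ioo] at hi
  rw [← aux_image, MeasureTheory.integral_image_eq_integral_abs_deriv_smul
    measurableSet_Ioo hd hinj, MeasureTheory.setIntegral_congr_fun measurableSet_Ioo
      (fun x hx => aux_point j x hx), MeasureTheory.integral_const_mul] at hv
  have hsin : 0 < Real.sin (π * j) :=
    Real.sin_pos_of_pos_of_lt_pi (by positivity) (by nlinarith [Real.pi_pos])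
  have g1 : 0 < Real.Gamma (1 - j / 2) := Real.Gamma_pos_of_pos (by linarith)
  have g2 : 0 < Real.Gamma ((1 + j) / 2) := Real.Gamma_pos_of_pos (by linarith)
  have g3 : 0 < Real.Gamma (1 - j) := Real.Gamma_pos_of_pos (by linarith)
  have key : (∫ x in (0:ℝ)..1, x ^ (j - 1) * (1 - x) ^ (-j) * (1 - x / 2) ^ (j - 1)) =
      π ^ ((3 : ℝ) / 2) /
        (Real.sin (π * j) * Real.Gamma (1 - j / 2) * Real.Gamma ((1 + j) / 2)) := by
    rw [intervalIntegral.integral_of_le zero_le_one, MeasureTheory.integral_Ioc_eq_integral_Ioo]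
    set I := ∫ x in Set.Ioo (0:ℝ) 1, x ^ (j - 1) * (1 - x) ^ (-j) * (1 - x / 2) ^ (j - 1)
    have hr := Real.Gamma_mul_Gamma_one_sub j
    have hdup := Real.Gamma_mul_Gamma_add_half ((1 - j) / 2)
    rw [show (1 - j) / 2 + 1 / 2 = 1 - j / 2 by ring, show 2 * ((1 - j) / 2) = 1 - j by ring,
      show 1 - (1 - j) = j by ring] at hdup
    rw [show (1 - j) / 2 + j = (1 + j) / 2 by ring, eq_div_iff g2.ne'] at hv
    have hpi : π ^ ((3 : ℝ) / 2) = π * √π := by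
      rw [Real.sqrt_eq_rpow, show (3:ℝ) / 2 = 1 + 1 / 2 by norm_num,
        Real.rpow_add Real.pi_pos, Real.rpow_one]
    rw [eq_div_iff hsin.ne'] at hr
    rw [hpi, eq_div_iff (by positivity)]
    apply mul_left_cancel₀ h2.ne'
    linear_combination (Real.sin (π * j) * Real.Gamma (1 - j / 2)) * hv +
      (Real.sin (π * j) * Real.Gamma j) * hdup + (2 ^ j * √π) * hr
  refine ⟨?_, key, ?_⟩
  · rw [intervalIntegrable_iff_integrableOn_Ioo_of_le zero_le_one]
    have := hi.const_mul (2 ^ j)⁻¹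
    simpa [MeasureTheory.IntegrableOn, ← mul_assoc, h2.ne'] using this
  · rw [key]
    have : 0 < π ^ ((3 : ℝ) / 2) := Real.rpow_pos_of_pos Real.pi_pos _
    positivity
end
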